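/- First Fundamental Theorem for the GFD of arbitrary order (Riemann–Liouville case): Let n ∈ ℕ and let (κ, k) be a pair of kernels from L_n. Then for every f ∈ C_{−1}(0,∞) and every t > 0, (D_{(k)} I_{(κ)} f)(t) = f(t), i.e. the n-th derivative dⁿ/dtⁿ of the function t ↦ (k * (κ * f))(t) exists and equals f(t). -/

import Mathlib

open Real MeasureTheory Set Filter Topology

/-- The Laplace convolution `(f * g)(t) = ∫₀ᵗ f(t-τ) g(τ) dτ`. -/
noncomputable def lconv (f g : ℝ → ℝ) : ℝ → ℝ :=
  fun t => ∫ τ in (0:ℝ)..t, f (t - τ) * g τ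

/-- The space `C_{-1}(0,∞)`: functions of the form `t^p f₁(t)` with `p > -1`
and `f₁` continuous on `[0,∞)`. -/
def Cm1 (f : ℝ → ℝ) : Prop :=
  ∃ p : ℝ, -1 < p ∧ ∃ f₁ : ℝ → ℝ, ContinuousOn f₁ (Set.Ici 0) ∧
    ∀ t : ℝ, 0 < t → f t = t ^ p * f₁ t

/-- The subspace `C_{-1,0}(0,∞)`: functions of the form `t^p f₁(t)` with `-1 < p < 0`
and `f₁` continuous on `[0,∞)`. -/
def Cm10 (f : ℝ → ℝ) : Prop :=
  ∃ p : ℝ, -1 < p ∧ p < 0 ∧ ∃ f₁ : ℝ → ℝ, ContinuousOn f₁ (Set.Ici 0) ∧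
    ∀ t : ℝ, 0 < t → f t = t ^ p * f₁ t

/-!
Everything rests on `k * (κ * f) = (k * κ) * f = t^(n-1)/(n-1)! * f` at every point of `(0,∞)`; by
Cauchy's formula for repeated integration the right-hand side is the `n`-fold integral of `f` from
`0`, and `n` differentiations undo it. Fubini gives associativity for integrable functions only
almost everywhere. It becomes pointwise for functions that are moreover bounded outside every
neighbourhood of `0`: in `∫₀ᵗ f(t-τ) g(τ) dτ` only one factor is near its singularity at a time, so
the integrand is dominated by `C (|f(t-τ)| + |g(τ)|)`, uniformly for `t ≥ ε > 0`.
-/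

section PointwiseConvolution

open ContinuousLinearMap (mul)
open scoped Convolution

/-- Integrable functions that vanish on `(-∞, 0]` and are bounded on `[ε, ∞)` for every `ε > 0`:
a class closed under convolution, in which convolution integrals converge at every point. -/
structure IsCausalKernel (F : ℝ → ℝ) : Prop where
  integrable : Integrable F
  eq_zero_of_nonpos : ∀ t ≤ 0, F t = 0
  exists_bound : ∀ ε > 0, ∃ C, ∀ t, ε ≤ t → ‖F t‖ ≤ C

namespace IsCausalKernel

variable {F G H : ℝ → ℝ}

lemma norm (hF : IsCausalKernel F) : IsCausalKernel (fun t => ‖F t‖) where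
  integrable := hF.integrable.norm
  eq_zero_of_nonpos t ht := by simp only [hF.eq_zero_of_nonpos t ht, norm_zero]
  exists_bound := by simpa only [norm_norm] using hF.exists_bound

lemma mul_eq_zero_of_nonpos (hF : IsCausalKernel F) (hG : IsCausalKernel G) {x : ℝ} (hx : x ≤ 0)
    (t : ℝ) : F t * G (x - t) = 0 := by
  rcases le_or_gt t 0 with ht | ht
  · rw [hF.eq_zero_of_nonpos t ht, zero_mul]
  · rw [hG.eq_zero_of_nonpos (x - t) (by linarith), mul_zero]

lemma exists_norm_mul_le (hF : IsCausalKernel F) (hG : IsCausalKernel G) {ε : ℝ} (hε : 0 < ε) :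
    ∃ C, ∀ x, ε ≤ x → ∀ t, ‖F t * G (x - t)‖ ≤ C * (‖F t‖ + ‖G (x - t)‖) := by
  obtain ⟨A, hA⟩ := hF.exists_bound (ε / 2) (half_pos hε)
  obtain ⟨B, hB⟩ := hG.exists_bound (ε / 2) (half_pos hε)
  refine ⟨max A B, fun x hx t => ?_⟩
  rw [norm_mul, mul_add]
  have hmax : 0 ≤ max A B := (norm_nonneg _).trans ((hA _ le_rfl).trans (le_max_left A B))
  rcases le_total (ε / 2) t with ht | ht
  · calc ‖F t‖ * ‖G (x - t)‖ ≤ max A B * ‖G (x - t)‖ := by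
          gcongr; exact (hA t ht).trans (le_max_left A B)
      _ ≤ _ := le_add_of_nonneg_left (by positivity)
  · calc ‖F t‖ * ‖G (x - t)‖ ≤ ‖F t‖ * max A B := by
          gcongr; exact (hB (x - t) (by linarith)).trans (le_max_right A B)
      _ = max A B * ‖F t‖ := mul_comm _ _
      _ ≤ _ := le_add_of_nonneg_right (by positivity)

lemma convolutionExists (hF : IsCausalKernel F) (hG : IsCausalKernel G) :
    ConvolutionExists F G (mul ℝ ℝ) := by
  intro x
  change Integrable fun t => F t * G (x - t)
  rcases le_or_gt x 0 with hx | hx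
  · exact (integrable_zero ℝ ℝ volume).congr <|
      Eventually.of_forall fun t => (hF.mul_eq_zero_of_nonpos hG hx t).symm
  · obtain ⟨C, hC⟩ := hF.exists_norm_mul_le hG hx
    have hG' := hG.integrable.comp_sub_left x
    exact ((hF.integrable.norm.add hG'.norm).const_mul C).mono'
      (hF.integrable.aestronglyMeasurable.mul hG'.aestronglyMeasurable)
      (Eventually.of_forall (hC x le_rfl))

lemma convolution (hF : IsCausalKernel F) (hG : IsCausalKernel G) :
    IsCausalKernel (F ⋆[mul ℝ ℝ] G) where
  integrable := hF.integrable.integrable_convolution _ hG.integrable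
  eq_zero_of_nonpos x hx := by
    rw [convolution_mul]
    simp only [hF.mul_eq_zero_of_nonpos hG hx, integral_zero]
  exists_bound ε hε := by
    obtain ⟨C, hC⟩ := hF.exists_norm_mul_le hG hε
    refine ⟨C * ((∫ t, ‖F t‖) + ∫ t, ‖G t‖), fun x hx => ?_⟩
    have hG' : Integrable fun t => ‖G (x - t)‖ := (hG.integrable.comp_sub_left x).norm
    calc ‖(F ⋆[mul ℝ ℝ] G) x‖ ≤ ∫ t, ‖F t * G (x - t)‖ := norm_integral_le_integral_norm _
      _ ≤ ∫ t, C * (‖F t‖ + ‖G (x - t)‖) :=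
          integral_mono (hF.convolutionExists hG x).norm
            ((hF.integrable.norm.add hG').const_mul C) (hC x hx)
      _ = C * ((∫ t, ‖F t‖) + ∫ t, ‖G t‖) := by
          rw [integral_const_mul, integral_add hF.integrable.norm hG',
            integral_sub_left_eq_self (fun t => ‖G t‖)]

lemma convolution_assoc (hF : IsCausalKernel F) (hG : IsCausalKernel G) (hH : IsCausalKernel H) :
    (F ⋆[mul ℝ ℝ] G) ⋆[mul ℝ ℝ] H = F ⋆[mul ℝ ℝ] (G ⋆[mul ℝ ℝ] H) := by
  ext x
  exact MeasureTheory.convolution_assoc _ _ _ _ mul_assoc hF.integrable.aestronglyMeasurable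
    hG.integrable.aestronglyMeasurable hH.integrable.aestronglyMeasurable
    (Eventually.of_forall (hF.convolutionExists hG))
    (Eventually.of_forall (hG.norm.convolutionExists hH.norm))
    (hF.norm.convolutionExists (hG.norm.convolution hH.norm) x)

end IsCausalKernel

lemma lconv_comm (f g : ℝ → ℝ) : lconv f g = lconv g f := by
  ext x
  have hsubst := intervalIntegral.integral_comp_sub_left (a := 0) (b := x)
    (fun τ => f τ * g (x - τ)) x
  simpa only [lconv, sub_sub_cancel, sub_self, sub_zero, mul_comm] using hsubst

lemma lconv_congr {f f' g g' : ℝ → ℝ} {x : ℝ} (hx : 0 ≤ x) (hf : EqOn f f' (Ioo 0 x))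
    (hg : EqOn g g' (Ioo 0 x)) : lconv f g x = lconv f' g' x :=
  intervalIntegral.integral_congr_Ioo_of_le hx fun t ht => by
    rw [hf ⟨sub_pos.2 ht.2, sub_lt_self x ht.1⟩, hg ht]

lemma lconv_eq_convolution {F G : ℝ → ℝ} (hF : ∀ t ≤ 0, F t = 0) (hG : ∀ t ≤ 0, G t = 0) {x : ℝ}
    (hx : 0 < x) : lconv F G x = (F ⋆[mul ℝ ℝ] G) x := by
  have indicator_eq {K : ℝ → ℝ} (hK : ∀ t ≤ 0, K t = 0) : indicator (Ioi 0) K = K :=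
    indicator_eq_self.2 fun t ht => not_le.1 fun hle => ht (hK t hle)
  have hconv := congrFun (posConvolution_eq_convolution_indicator F G (mul ℝ ℝ)) x
  rw [indicator_eq hF, indicator_eq hG] at hconv
  rw [← hconv, posConvolution, indicator_of_mem (mem_Ioi.2 hx), lconv_comm]
  simp only [lconv, ContinuousLinearMap.mul_apply', mul_comm]

/-- Membership in `C(0,∞) ∩ L¹_loc[0,∞)`, a class containing `C_{-1}(0,∞)` on which `lconv` is
associative at every point of `(0,∞)`. Values on `(-∞, 0]` are unconstrained. -/
structure IsWeaklySingular (f : ℝ → ℝ) : Prop where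
  continuousOn : ContinuousOn f (Ioi 0)
  integrableOn : ∀ T, IntegrableOn f (Ioc 0 T)

lemma IsWeaklySingular.of_continuous {f : ℝ → ℝ} (hf : Continuous f) : IsWeaklySingular f where
  continuousOn := hf.continuousOn
  integrableOn T := (hf.intervalIntegrable 0 T).1

lemma Cm1.isWeaklySingular {f : ℝ → ℝ} (hf : Cm1 f) : IsWeaklySingular f := by
  obtain ⟨p, hp, f₁, hf₁, hf_eq⟩ := hf
  constructor
  · have hpow : ContinuousOn (fun t : ℝ => t ^ p) (Ioi 0) :=
      continuousOn_id.rpow_const fun t ht => Or.inl (ne_of_gt ht)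
    exact (hpow.mul (hf₁.mono Ioi_subset_Ici_self)).congr hf_eq
  · intro T
    have hpow : IntegrableOn (fun t : ℝ => t ^ p) (Ioc 0 T) :=
      (intervalIntegral.intervalIntegrable_rpow' hp).1
    exact (hpow.mul_continuousOn_of_subset (hf₁.mono Icc_subset_Ici_self) measurableSet_Ioc
      isCompact_Icc Ioc_subset_Icc_self).congr_fun (fun t ht => (hf_eq t ht.1).symm)
        measurableSet_Ioc

lemma Cm10.cm1 {f : ℝ → ℝ} (hf : Cm10 f) : Cm1 f :=
  let ⟨p, hp, _, hf₁⟩ := hf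
  ⟨p, hp, hf₁⟩

namespace IsWeaklySingular

variable {f g h : ℝ → ℝ}

lemma isCausalKernel_indicator (hf : IsWeaklySingular f) (T : ℝ) :
    IsCausalKernel (indicator (Ioc 0 T) f) where
  integrable := (hf.integrableOn T).integrable_indicator measurableSet_Ioc
  eq_zero_of_nonpos t ht := indicator_of_notMem (fun h => ht.not_gt h.1) f
  exists_bound ε hε := by
    obtain ⟨C, hC⟩ := (isCompact_Icc (a := ε) (b := T)).exists_bound_of_continuousOn
      (hf.continuousOn.mono fun t ht => hε.trans_le ht.1)
    refine ⟨max C 0, fun t ht => ?_⟩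
    by_cases htT : t ∈ Ioc 0 T
    · rw [indicator_of_mem htT]
      exact (hC t ⟨ht, htT.2⟩).trans (le_max_left C 0)
    · rw [indicator_of_notMem htT, norm_zero]
      exact le_max_right C 0

-- Up to time `x` the convolutions only see the truncations to `(0, x]`.
lemma lconv_assoc (hf : IsWeaklySingular f) (hg : IsWeaklySingular g) (hh : IsWeaklySingular h)
    {x : ℝ} (hx : 0 < x) : lconv f (lconv g h) x = lconv (lconv f g) h x := by
  let trunc (u : ℝ → ℝ) : ℝ → ℝ := indicator (Ioc 0 x) u
  have hF : IsCausalKernel (trunc f) := hf.isCausalKernel_indicator x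
  have hG : IsCausalKernel (trunc g) := hg.isCausalKernel_indicator x
  have hH : IsCausalKernel (trunc h) := hh.isCausalKernel_indicator x
  have eqOn_trunc (u : ℝ → ℝ) : EqOn u (trunc u) (Ioo 0 x) := fun t ht =>
    (indicator_of_mem (Ioo_subset_Ioc_self ht) u).symm
  have lconv_trunc {u v : ℝ → ℝ} (hu : IsCausalKernel (trunc u)) (hv : IsCausalKernel (trunc v)) :
      EqOn (lconv u v) (trunc u ⋆[mul ℝ ℝ] trunc v) (Ioo 0 x) := fun y hy => by
    have hsub : Ioo 0 y ⊆ Ioo 0 x := Ioo_subset_Ioo_right hy.2.le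
    rw [lconv_congr hy.1.le ((eqOn_trunc u).mono hsub) ((eqOn_trunc v).mono hsub),
      lconv_eq_convolution hu.eq_zero_of_nonpos hv.eq_zero_of_nonpos hy.1]
  calc lconv f (lconv g h) x
      = lconv (trunc f) (trunc g ⋆[mul ℝ ℝ] trunc h) x :=
        lconv_congr hx.le (eqOn_trunc f) (lconv_trunc hG hH)
    _ = (trunc f ⋆[mul ℝ ℝ] (trunc g ⋆[mul ℝ ℝ] trunc h)) x :=
        lconv_eq_convolution hF.eq_zero_of_nonpos (hG.convolution hH).eq_zero_of_nonpos hx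
    _ = ((trunc f ⋆[mul ℝ ℝ] trunc g) ⋆[mul ℝ ℝ] trunc h) x := by
        rw [hF.convolution_assoc hG hH]
    _ = lconv (trunc f ⋆[mul ℝ ℝ] trunc g) (trunc h) x :=
        (lconv_eq_convolution (hF.convolution hG).eq_zero_of_nonpos hH.eq_zero_of_nonpos hx).symm
    _ = lconv (lconv f g) h x :=
        (lconv_congr hx.le (lconv_trunc hF hG) (eqOn_trunc h)).symm

end IsWeaklySingular

end PointwiseConvolution

namespace IsWeaklySingular

variable {f : ℝ → ℝ}

lemma intervalIntegrable (hf : IsWeaklySingular f) {t : ℝ} (ht : 0 ≤ t) :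
    IntervalIntegrable f volume 0 t :=
  (intervalIntegrable_iff_integrableOn_Ioc_of_le ht).2 (hf.integrableOn t)

lemma hasDerivAt_integral (hf : IsWeaklySingular f) {t : ℝ} (ht : 0 < t) :
    HasDerivAt (fun t => ∫ s in 0..t, f s) (f t) t :=
  intervalIntegral.integral_hasDerivAt_right (hf.intervalIntegrable ht.le)
    (hf.continuousOn.stronglyMeasurableAtFilter isOpen_Ioi t ht)
    (hf.continuousOn.continuousAt (Ioi_mem_nhds ht))

lemma primitive (hf : IsWeaklySingular f) : IsWeaklySingular (fun t => ∫ s in 0..t, f s) where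
  continuousOn _ ht := (hf.hasDerivAt_integral ht).continuousAt.continuousWithinAt
  integrableOn T := by
    rcases le_total T 0 with hT | hT
    · simp only [Ioc_eq_empty_of_le hT, integrableOn_empty]
    · have hcont := intervalIntegral.continuousOn_primitive_interval'
        (hf.intervalIntegrable hT) left_mem_uIcc
      exact hcont.intervalIntegrable.1

end IsWeaklySingular

/-- The `m`-fold repeated integral of `f` from `0`, an `m`-fold antiderivative on `(0,∞)`. -/
noncomputable def repeatedIntegral (f : ℝ → ℝ) : ℕ → ℝ → ℝ
  | 0 => f
  | m + 1 => fun t => ∫ s in 0..t, repeatedIntegral f m s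

lemma lconv_one_left (f : ℝ → ℝ) : lconv 1 f = fun t => ∫ s in 0..t, f s := by
  ext t
  simp only [lconv, Pi.one_apply, one_mul]

lemma lconv_one_pow_div_factorial (m : ℕ) :
    lconv 1 (fun t => t ^ m / m.factorial) = fun t : ℝ => t ^ (m + 1) / (m + 1).factorial := by
  rw [lconv_one_left]
  ext t
  rw [intervalIntegral.integral_div, integral_pow, zero_pow m.succ_ne_zero,
    sub_zero, div_div, Nat.factorial_succ, Nat.cast_mul, Nat.cast_succ]

lemma isWeaklySingular_repeatedIntegral {f : ℝ → ℝ} (hf : IsWeaklySingular f) (m : ℕ) :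
    IsWeaklySingular (repeatedIntegral f m) := by
  induction m with
  | zero => exact hf
  | succ m ih => exact ih.primitive

lemma hasDerivAt_repeatedIntegral_succ {f : ℝ → ℝ} (hf : IsWeaklySingular f)
    (m : ℕ) {t : ℝ} (ht : 0 < t) :
    HasDerivAt (repeatedIntegral f (m + 1)) (repeatedIntegral f m t) t :=
  (isWeaklySingular_repeatedIntegral hf m).hasDerivAt_integral ht

lemma lconv_pow_div_factorial_eq_repeatedIntegral {f : ℝ → ℝ}
    (hf : IsWeaklySingular f) (m : ℕ) {t : ℝ} (ht : 0 < t) :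
    lconv (fun s => s ^ m / m.factorial) f t = repeatedIntegral f (m + 1) t := by
  induction m generalizing t with
  | zero => simp only [lconv, repeatedIntegral, pow_zero, Nat.factorial_zero, Nat.cast_one, div_one,
      one_mul]
  | succ m ih =>
    have hpow : IsWeaklySingular fun s => s ^ m / m.factorial :=
      IsWeaklySingular.of_continuous (by fun_prop)
    calc lconv (fun s => s ^ (m + 1) / (m + 1).factorial) f t
        = lconv (lconv 1 fun s => s ^ m / m.factorial) f t := by
          rw [lconv_one_pow_div_factorial]
      _ = lconv 1 (lconv (fun s => s ^ m / m.factorial) f) t :=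
          ((IsWeaklySingular.of_continuous continuous_one).lconv_assoc hpow hf ht).symm
      _ = lconv 1 (repeatedIntegral f (m + 1)) t :=
          lconv_congr ht.le (eqOn_refl _ _) fun s hs => ih hs.1
      _ = repeatedIntegral f (m + 2) t :=
          congrFun (lconv_one_left _) t

lemma eqOn_iteratedDeriv_of_hasDerivAt_succ {𝕜 E : Type*} [NontriviallyNormedField 𝕜]
    [NormedAddCommGroup E] [NormedSpace 𝕜 E] {F : ℕ → 𝕜 → E} {s : Set 𝕜} (hs : IsOpen s)
    (hF : ∀ m, ∀ t ∈ s, HasDerivAt (F (m + 1)) (F m t) t) (j m : ℕ) :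
    EqOn (iteratedDeriv j (F (m + j))) (F m) s := by
  induction j generalizing m with
  | zero => rw [iteratedDeriv_zero, Nat.add_zero]; exact eqOn_refl _ _
  | succ j ih =>
    intro t ht
    have hj : iteratedDeriv j (F (m + (j + 1))) =ᶠ[𝓝 t] F (m + 1) := by
      rw [← Nat.succ_add_eq_add_succ]
      exact (ih (m + 1)).eventuallyEq_of_mem (hs.mem_nhds ht)
    rw [iteratedDeriv_succ, hj.deriv_eq, (hF m t ht).deriv]

theorem statement11_general {n : ℕ} (hn : 1 ≤ n) {κ k f : ℝ → ℝ} (hκ : IsWeaklySingular κ)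
    (hk : IsWeaklySingular k) (hf : IsWeaklySingular f)
    (hL : ∀ t : ℝ, 0 < t → lconv κ k t = t ^ (n - 1) / (n - 1).factorial) :
    (∀ j < n, ∀ t : ℝ, 0 < t →
        DifferentiableAt ℝ (iteratedDeriv j (lconv k (lconv κ f))) t) ∧
      ∀ t : ℝ, 0 < t → iteratedDeriv n (lconv k (lconv κ f)) t = f t := by
  have hconv : EqOn (lconv k (lconv κ f)) (repeatedIntegral f n) (Ioi 0) := fun t ht => by
    rw [hk.lconv_assoc hκ hf ht, lconv_comm k κ,
      lconv_congr (mem_Ioi.1 ht).le (fun s hs => hL s hs.1) (eqOn_refl f _),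
      lconv_pow_div_factorial_eq_repeatedIntegral hf (n - 1) ht, Nat.sub_add_cancel hn]
  have hderiv (j m : ℕ) (hjm : m + j = n) :
      EqOn (iteratedDeriv j (lconv k (lconv κ f))) (repeatedIntegral f m) (Ioi 0) := by
    subst hjm
    exact (hconv.iteratedDeriv_of_isOpen isOpen_Ioi j).trans <|
      eqOn_iteratedDeriv_of_hasDerivAt_succ isOpen_Ioi
        (fun m _ ht => hasDerivAt_repeatedIntegral_succ hf m ht) j m
  refine ⟨fun j hj t ht => ?_, fun t ht => hderiv n 0 (Nat.zero_add n) ht⟩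
  obtain ⟨m, rfl⟩ := Nat.exists_eq_add_of_lt hj
  exact (hasDerivAt_repeatedIntegral_succ hf m ht).differentiableAt.congr_of_eventuallyEq <|
    (hderiv j (m + 1) (by omega)).eventuallyEq_of_mem (Ioi_mem_nhds ht)

/-- First Fundamental Theorem for the GFD of arbitrary order,
Riemann-Liouville case: for a pair `(κ, k) ∈ L_n` and `f ∈ C_{-1}(0,∞)`, the `n`-th
derivative of `k * (κ * f)` exists on `(0,∞)` and equals `f`. -/
theorem statement11 (n : ℕ) (hn : 1 ≤ n) (κ k : ℝ → ℝ)
    (hκ : Cm1 κ) (hk : Cm10 k)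
    (hL : ∀ t : ℝ, 0 < t → lconv κ k t = t ^ (n - 1) / (n - 1).factorial)
    (f : ℝ → ℝ) (hf : Cm1 f) :
    (∀ j < n, ∀ t : ℝ, 0 < t →
        DifferentiableAt ℝ (iteratedDeriv j (lconv k (lconv κ f))) t) ∧
      ∀ t : ℝ, 0 < t → iteratedDeriv n (lconv k (lconv κ f)) t = f t :=
  statement11_general hn hκ.isWeaklySingular hk.cm1.isWeaklySingular hf.isWeaklySingular hL
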